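/- Let a > 0, and let α be a smooth simple closed counterclockwise curve of length L enclosing area A > 0, parametrized by arc length, with curvature κ(s) = a|α(s)|² + b for some b ∈ ℝ. If l > (π/2)·√(L/(aA)), then there exists a smooth function u(t,s) = f(t)g(s) on [0,l] × [0,L] with f(0) = f(l) = 0, g L-periodic, ∫₀ᴸ g ds = 0, such that Φ(u) = −∫∫ u·(Δ₀u + (κ² + 2a(α₁α₂' − α₂α₁'))u) dt ds < 0. -/

import Mathlib

open MeasureTheory Real intervalIntegral

/-!
Let `f t = sin (π t / l)` and let `g₁, g₂` be the components of the unit tangent of `α`. They are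
periodic with zero mean, and `g₁ g₁'' + g₂ g₂'' = -κ²`, so the curvature cancels from
`Φ(f g₁) + Φ(f g₂)`. Since `∮ (α₁ α₂' - α₂ α₁') = 2 A`, this sum equals
`(l / 2) (π² L / l² - 4 a A)`, which is negative for `l` beyond the threshold; hence one of the
two summands is negative.

The area formula is Green's formula for the coordinate functions. By a partition of unity it is
enough to prove Green's formula for functions supported in `Ω` or in a small box of the collar
coordinates `(s, r) ↦ α s + r J α'(s)`. In the box it is the divergence theorem on a rectangle,
once `Ω` is known to lie only to the left of the curve. This holds because being interior to
`closure Ω` is a locally constant property of the points of the curve: if they all had it,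
the bounded set `closure Ω` would be clopen.
-/

section PlanarGreen

open Set Filter Metric Topology

section PlaneAlgebra

/-- The oriented area of the parallelogram spanned by `v` and `w`. -/
def wedge (v w : ℝ × ℝ) : ℝ := v.1 * w.2 - v.2 * w.1

/-- The rotation of `v` by a quarter turn counterclockwise, normal to the left of a curve
with velocity `v`. -/
def leftNormal (v : ℝ × ℝ) : ℝ × ℝ := (-v.2, v.1)

lemma wedge_leftNormal_pos {v : ℝ × ℝ} (hv : v ≠ 0) : 0 < wedge v (leftNormal v) := by
  have hsq : wedge v (leftNormal v) = v.1 ^ 2 + v.2 ^ 2 := by simp only [wedge, leftNormal]; ring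
  rw [hsq]
  contrapose! hv
  ext <;> simp <;> nlinarith [sq_nonneg v.1, sq_nonneg v.2]

lemma eq_smul_basis (v : ℝ × ℝ) : v = v.1 • ((1, 0) : ℝ × ℝ) + v.2 • ((0, 1) : ℝ × ℝ) := by simp

lemma det_eq_wedge (A : ℝ × ℝ →L[ℝ] ℝ × ℝ) : A.det = wedge (A (1, 0)) (A (0, 1)) := by
  rw [ContinuousLinearMap.det, ← LinearMap.det_toMatrix (Module.Basis.finTwoProd ℝ),
    Matrix.det_fin_two]
  simp [LinearMap.toMatrix_apply, wedge]
  ring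

lemma map_mul_wedge_sub_map_mul_wedge (ℓ : ℝ × ℝ →L[ℝ] ℝ) (w p q : ℝ × ℝ) :
    ℓ p * wedge w q - ℓ q * wedge w p = ℓ w * wedge p q := by
  have hℓ (v : ℝ × ℝ) : ℓ v = v.1 * ℓ (1, 0) + v.2 * ℓ (0, 1) := by
    conv_lhs => rw [eq_smul_basis v]
    simp only [map_add, map_smul, smul_eq_mul]
  rw [hℓ p, hℓ q, hℓ w]
  simp only [wedge]
  ring

end PlaneAlgebra

section PeriodicCurve

variable {X : Type*} {α : ℝ → X} {L : ℝ}

lemma injective_periodic_lift [Fact (0 < L)] (hα : Function.Periodic α L)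
    (hinj : InjOn α (Ico 0 L)) : Function.Injective (hα.lift : AddCircle L → X) := by
  intro p q hpq
  obtain ⟨s, hs, rfl⟩ := AddCircle.coe_image_Ico_eq (p := L) 0 ▸ mem_univ p
  obtain ⟨t, ht, rfl⟩ := AddCircle.coe_image_Ico_eq (p := L) 0 ▸ mem_univ q
  rw [zero_add] at hs ht
  rw [hinj hs ht hpq]

lemma injOn_Ico_of_periodic (hL : 0 < L) (hα : Function.Periodic α L)
    (hinj : InjOn α (Ico 0 L)) (c : ℝ) : InjOn α (Ico c (c + L)) := by
  have : Fact (0 < L) := ⟨hL⟩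
  intro s hs t ht hst
  exact (AddCircle.coe_eq_coe_iff_of_mem_Ico hs ht).1 (injective_periodic_lift hα hinj hst)

lemma image_Ico_eq_range_of_periodic (hL : 0 < L) (hα : Function.Periodic α L) :
    α '' Ico 0 L = range α := by
  refine (image_subset_range _ _).antisymm ?_
  rintro _ ⟨s, rfl⟩
  obtain ⟨t, ht, hst⟩ := hα.exists_mem_Ico₀ hL s
  exact ⟨t, ht, hst.symm⟩

lemma map_nhds_eq_nhdsWithin_range_of_periodic [TopologicalSpace X] [T2Space X] (hL : 0 < L)
    (hα : Function.Periodic α L) (hinj : InjOn α (Ico 0 L)) (hcont : Continuous α) (s : ℝ) :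
    map α (𝓝 s) = 𝓝[range α] (α s) := by
  have : Fact (0 < L) := ⟨hL⟩
  have hemb : IsClosedEmbedding (hα.lift : AddCircle L → X) :=
    Continuous.isClosedEmbedding (hcont.quotient_lift _) (injective_periodic_lift hα hinj)
  have hrange : range (hα.lift : AddCircle L → X) = range α := range_quot_lift _
  have hmap : map α (𝓝 s) = map hα.lift (𝓝 (s : AddCircle L)) := by
    rw [← QuotientAddGroup.isOpenQuotientMap_mk.map_nhds_eq s, map_map]
    rfl
  rw [hmap, hemb.map_nhds_eq, hrange, hα.lift_coe]

end PeriodicCurve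

lemma subset_of_isPreconnected_of_disjoint_frontier {X : Type*} [TopologicalSpace X]
    {s u : Set X} (hs : IsPreconnected s) (hu : IsOpen u) (hsu : (s ∩ u).Nonempty)
    (hdisj : Disjoint s (frontier u)) : s ⊆ u := by
  refine hs.subset_of_closure_inter_subset hu hsu ?_
  rintro x ⟨hxu, hxs⟩
  rw [closure_eq_self_union_frontier] at hxu
  exact hxu.resolve_right (disjoint_left.1 hdisj hxs)

section InverseFunction

variable {E : Type*} [NormedAddCommGroup E] [NormedSpace ℝ E] [FiniteDimensional ℝ E] {F : E → E}

lemma exists_hasStrictFDerivAt_equiv_of_det_fderiv_ne_zero (hF : ContDiff ℝ 1 F) {x : E}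
    (hdet : (fderiv ℝ F x).det ≠ 0) : ∃ e : E ≃L[ℝ] E, HasStrictFDerivAt F (e : E →L[ℝ] E) x :=
  ⟨_, ContinuousLinearMap.coe_toContinuousLinearEquivOfDetNeZero _ hdet ▸
    hF.contDiffAt.hasStrictFDerivAt one_ne_zero⟩

lemma isOpen_image_of_det_fderiv_ne_zero (hF : ContDiff ℝ 1 F) {U : Set E} (hU : IsOpen U)
    (hdet : ∀ x ∈ U, (fderiv ℝ F x).det ≠ 0) : IsOpen (F '' U) := by
  rw [isOpen_iff_mem_nhds]
  rintro _ ⟨x, hx, rfl⟩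
  obtain ⟨e, he⟩ := exists_hasStrictFDerivAt_equiv_of_det_fderiv_ne_zero hF (hdet x hx)
  rw [← he.map_nhds_eq_of_equiv]
  exact image_mem_map (hU.mem_nhds hx)

lemma exists_injOn_nhds_of_det_fderiv_ne_zero (hF : ContDiff ℝ 1 F) {x : E}
    (hdet : (fderiv ℝ F x).det ≠ 0) : ∃ V ∈ 𝓝 x, InjOn F V := by
  obtain ⟨e, he⟩ := exists_hasStrictFDerivAt_equiv_of_det_fderiv_ne_zero hF hdet
  exact ⟨_, (he.toOpenPartialHomeomorph F).open_source.mem_nhds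
    he.mem_toOpenPartialHomeomorph_source, (he.toOpenPartialHomeomorph F).injOn⟩

end InverseFunction

section RectangleGreen

variable {F : ℝ × ℝ → ℝ × ℝ} {φ : ℝ × ℝ → ℝ}

/-- The flux density of the field `φ • w` through the parametrised surface `F`, in the parameter
direction `v`: the pullback of the one-form `φ (w.1 dy - w.2 dx)` along `F`, evaluated on `v`. -/
noncomputable def fluxDensity (F : ℝ × ℝ → ℝ × ℝ) (φ : ℝ × ℝ → ℝ) (w v q : ℝ × ℝ) : ℝ :=
  φ (F q) * wedge w (fderiv ℝ F q v)

lemma contDiff_fluxDensity (hF : ContDiff ℝ 2 F) (hφ : ContDiff ℝ 1 φ) (w v : ℝ × ℝ) :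
    ContDiff ℝ 1 (fluxDensity F φ w v) := by
  have hF' : ContDiff ℝ 1 fun q => fderiv ℝ F q v :=
    (hF.fderiv_right (by norm_num)).clm_apply contDiff_const
  have hφF : ContDiff ℝ 1 fun q => φ (F q) := hφ.comp (hF.of_le (by norm_num))
  exact hφF.mul ((contDiff_const.mul hF'.snd).sub (contDiff_const.mul hF'.fst))

lemma fderiv_fluxDensity_apply (hF : ContDiff ℝ 2 F) (hφ : ContDiff ℝ 1 φ) (w u v q : ℝ × ℝ) :
    fderiv ℝ (fluxDensity F φ w v) q u =
      fderiv ℝ φ (F q) (fderiv ℝ F q u) * wedge w (fderiv ℝ F q v) +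
        φ (F q) * wedge w (fderiv ℝ (fderiv ℝ F) q u v) := by
  have hφF := ((hφ.differentiable one_ne_zero) (F q)).hasFDerivAt.comp q
    ((hF.differentiable two_ne_zero) q).hasFDerivAt
  have hF' : HasFDerivAt (fun p => fderiv ℝ F p v) ((fderiv ℝ (fderiv ℝ F) q).flip v) q := by
    have := ((hF.fderiv_right (m := 1) (by norm_num)).differentiable one_ne_zero q).hasFDerivAt
    simpa using this.clm_apply (hasFDerivAt_const v q)
  have hflux : HasFDerivAt (fluxDensity F φ w v) _ q :=
    hφF.mul ((hF'.snd.const_mul w.1).sub (hF'.fst.const_mul w.2))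
  rw [hflux.fderiv]
  simp [wedge]
  ring

lemma fderiv_fluxDensity_sub (hF : ContDiff ℝ 2 F) (hφ : ContDiff ℝ 1 φ) (w q : ℝ × ℝ) :
    fderiv ℝ (fluxDensity F φ w (0, 1)) q (1, 0) - fderiv ℝ (fluxDensity F φ w (1, 0)) q (0, 1) =
      (fderiv ℝ F q).det * fderiv ℝ φ (F q) w := by
  have hsymm : fderiv ℝ (fderiv ℝ F) q (1, 0) (0, 1) = fderiv ℝ (fderiv ℝ F) q (0, 1) (1, 0) :=
    hF.contDiffAt.isSymmSndFDerivAt (by simp) _ _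
  rw [fderiv_fluxDensity_apply hF hφ, fderiv_fluxDensity_apply hF hφ, hsymm, det_eq_wedge]
  linear_combination map_mul_wedge_sub_map_mul_wedge (fderiv ℝ φ (F q)) w
    (fderiv ℝ F q (1, 0)) (fderiv ℝ F q (0, 1))

lemma setIntegral_Icc_det_mul_fderiv (hF : ContDiff ℝ 2 F) (hφ : ContDiff ℝ 1 φ) (w : ℝ × ℝ)
    {a b : ℝ × ℝ} (hab : a ≤ b) :
    ∫ q in Icc a b, (fderiv ℝ F q).det * fderiv ℝ φ (F q) w =
      (∫ s in a.1..b.1, fluxDensity F φ w (1, 0) (s, a.2)) +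
        (∫ r in a.2..b.2, fluxDensity F φ w (0, 1) (b.1, r)) -
        (∫ s in a.1..b.1, fluxDensity F φ w (1, 0) (s, b.2)) -
        ∫ r in a.2..b.2, fluxDensity F φ w (0, 1) (a.1, r) := by
  have hflux (v : ℝ × ℝ) := contDiff_fluxDensity hF hφ w v
  have hderiv (v q : ℝ × ℝ) := ((hflux v).differentiable one_ne_zero q).hasFDerivAt
  have hcont (u v : ℝ × ℝ) : Continuous fun q => fderiv ℝ (fluxDensity F φ w v) q u :=
    ((hflux v).continuous_fderiv one_ne_zero).clm_apply continuous_const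
  have hdiv := integral_divergence_prod_Icc_of_hasFDerivAt_of_le
    (fluxDensity F φ w (0, 1)) (fun q => -fluxDensity F φ w (1, 0) q)
    (fderiv ℝ (fluxDensity F φ w (0, 1))) (fun q => -fderiv ℝ (fluxDensity F φ w (1, 0)) q)
    a b hab (hflux _).continuous.continuousOn (hflux _).continuous.neg.continuousOn
    (fun q _ => hderiv _ q) (fun q _ => (hderiv _ q).neg)
    (((hcont _ _).add (hcont _ _).neg).continuousOn.integrableOn_compact isCompact_Icc)
  simp only [neg_apply, ← sub_eq_add_neg, fderiv_fluxDensity_sub hF hφ,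
    intervalIntegral.integral_neg] at hdiv
  rw [hdiv]
  ring

lemma setIntegral_image_fderiv_apply (hF : ContDiff ℝ 2 F) (hφ : ContDiff ℝ 1 φ) (w : ℝ × ℝ)
    {a b : ℝ × ℝ} (hab : a ≤ b) (hinj : InjOn F (Ioo a.1 b.1 ×ˢ Ioo a.2 b.2))
    (hdet : ∀ q ∈ Ioo a.1 b.1 ×ˢ Ioo a.2 b.2, 0 < (fderiv ℝ F q).det) :
    ∫ z in F '' (Ioo a.1 b.1 ×ˢ Ioo a.2 b.2), fderiv ℝ φ z w =
      (∫ s in a.1..b.1, fluxDensity F φ w (1, 0) (s, a.2)) +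
        (∫ r in a.2..b.2, fluxDensity F φ w (0, 1) (b.1, r)) -
        (∫ s in a.1..b.1, fluxDensity F φ w (1, 0) (s, b.2)) -
        ∫ r in a.2..b.2, fluxDensity F φ w (0, 1) (a.1, r) := by
  have hmeas : MeasurableSet (Ioo a.1 b.1 ×ˢ Ioo a.2 b.2) :=
    measurableSet_Ioo.prod measurableSet_Ioo
  have hae : (Ioo a.1 b.1 ×ˢ Ioo a.2 b.2 : Set (ℝ × ℝ)) =ᵐ[volume] Icc a b := by
    rw [show Icc a b = Icc a.1 b.1 ×ˢ Icc a.2 b.2 from (Icc_prod_Icc _ _ _ _).symm]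
    exact Measure.set_prod_ae_eq Ioo_ae_eq_Icc Ioo_ae_eq_Icc
  rw [integral_image_eq_integral_abs_det_fderiv_smul volume hmeas
      (fun q _ => (hF.differentiable two_ne_zero q).hasFDerivAt.hasFDerivWithinAt) hinj,
    ← setIntegral_Icc_det_mul_fderiv hF hφ w hab, ← setIntegral_congr_set hae]
  exact setIntegral_congr_fun hmeas fun q hq => by
    simp only [abs_of_pos (hdet q hq), smul_eq_mul]

end RectangleGreen

lemma integral_fderiv_apply_eq_zero {E : Type*} [NormedAddCommGroup E] [NormedSpace ℝ E]
    [FiniteDimensional ℝ E] [MeasurableSpace E] [BorelSpace E] (μ : Measure E)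
    [μ.IsAddHaarMeasure] {φ : E → ℝ} (hφ : ContDiff ℝ 1 φ) (hsupp : HasCompactSupport φ) (w : E) :
    ∫ z, fderiv ℝ φ z w ∂μ = 0 := by
  have hint : Integrable (fun z => fderiv ℝ φ z w) μ :=
    ((hφ.continuous_fderiv one_ne_zero).clm_apply continuous_const).integrable_of_hasCompactSupport
      (hsupp.fderiv_apply ℝ w)
  simpa using integral_mul_fderiv_eq_neg_fderiv_mul_of_integrable (μ := μ) (f := fun _ => (1 : ℝ))
    (g := φ) (v := w) (by simp) (by simpa using hint)
    (by simpa using hφ.continuous.integrable_of_hasCompactSupport hsupp)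
    (fun _ _ => by fun_prop) (fun z _ => hφ.differentiable one_ne_zero z)

open scoped Manifold in
lemma exists_contDiff_decomposition {E : Type*} [NormedAddCommGroup E] [NormedSpace ℝ E]
    [FiniteDimensional ℝ E] {K : Set E} (hK : IsCompact K) {U : E → Set E}
    (hUo : ∀ z ∈ K, IsOpen (U z)) (hzU : ∀ z ∈ K, z ∈ U z) {φ : E → ℝ} {n : ℕ∞}
    (hφ : ContDiff ℝ n φ) :
    ∃ (t : Finset E) (ψ : t → E → ℝ), (∀ i, ↑i ∈ K ∧ ContDiff ℝ n (ψ i) ∧ tsupport (ψ i) ⊆ U i) ∧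
      ∀ z ∈ K, ∑ i, ψ i z = φ z := by
  obtain ⟨t, htK, hcover⟩ :=
    hK.elim_nhds_subcover U fun z hz => (hUo z hz).mem_nhds (hzU z hz)
  obtain ⟨ρ, hρ⟩ := SmoothPartitionOfUnity.exists_isSubordinate 𝓘(ℝ, E) hK.isClosed
    (fun i : t => U i) (fun i => hUo i (htK i i.2)) (by simpa [iUnion_subtype] using hcover)
  refine ⟨t, fun i z => ρ i z * φ z, fun i => ⟨htK i i.2, ?_, ?_⟩, fun z hz => ?_⟩
  · exact ((ρ i).contMDiff.contDiff.of_le (mod_cast le_top)).mul hφ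
  · exact tsupport_mul_subset_left.trans (hρ i)
  · rw [← Finset.sum_mul, ← finsum_eq_sum_of_fintype, ρ.sum_eq_one hz, one_mul]

section Collar

/-- A regular simple closed curve of period `L`; three derivatives make its collar twice
differentiable. -/
structure IsRegularClosedCurve (α : ℝ → ℝ × ℝ) (L : ℝ) : Prop where
  period_pos : 0 < L
  contDiff : ContDiff ℝ 3 α
  deriv_ne_zero : ∀ s, deriv α s ≠ 0
  periodic : Function.Periodic α L
  injOn : InjOn α (Ico 0 L)

/-- The collar map `(s, r) ↦ α s + r J α'(s)`, which straightens the curve `α` to the axis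
`r = 0` and puts its left side in `r > 0`. -/
noncomputable def collar (α : ℝ → ℝ × ℝ) (q : ℝ × ℝ) : ℝ × ℝ :=
  α q.1 + q.2 • leftNormal (deriv α q.1)

/-- The half-width `δ` of a box around `(s₀, 0)` in which the collar map is a chart flattening
the curve: a positively oriented injection hitting the curve only along the axis. -/
structure IsCollarRadius (α : ℝ → ℝ × ℝ) (s₀ δ : ℝ) : Prop where
  pos : 0 < δ
  injOn : InjOn (collar α) (Icc (s₀ - δ) (s₀ + δ) ×ˢ Icc (-δ) δ)
  det_pos : ∀ q ∈ Icc (s₀ - δ) (s₀ + δ) ×ˢ Icc (-δ) δ, 0 < (fderiv ℝ (collar α) q).det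
  snd_eq_zero : ∀ q ∈ Icc (s₀ - δ) (s₀ + δ) ×ˢ Icc (-δ) δ, collar α q ∈ range α → q.2 = 0

variable {α : ℝ → ℝ × ℝ} {L s₀ δ : ℝ}

lemma collar_axis (α : ℝ → ℝ × ℝ) (s : ℝ) : collar α (s, 0) = α s := by simp [collar]

lemma contDiff_collar (hα : ContDiff ℝ 3 α) : ContDiff ℝ 2 (collar α) := by
  have hα' : ContDiff ℝ 2 (deriv α) := (contDiff_succ_iff_deriv.1 hα).2.2
  have hnormal : ContDiff ℝ 2 leftNormal := contDiff_snd.neg.prodMk contDiff_fst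
  exact ((hα.of_le (by norm_num)).comp contDiff_fst).add
    (contDiff_snd.smul (hnormal.comp (hα'.comp contDiff_fst)))

lemma fderiv_collar_axis_tangent (hα : ContDiff ℝ 3 α) (s : ℝ) :
    fderiv ℝ (collar α) (s, 0) (1, 0) = deriv α s := by
  have hF := ((contDiff_collar hα).differentiable two_ne_zero (s, 0)).hasFDerivAt
  have hcurve : HasDerivAt (fun t => collar α (t, 0)) (fderiv ℝ (collar α) (s, 0) (1, 0)) s :=
    hF.comp_hasDerivAt (f := fun t => (t, 0)) s
      ((hasDerivAt_id' s).prodMk (hasDerivAt_const s (0 : ℝ)))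
  simp only [collar_axis] at hcurve
  exact hcurve.deriv.symm

lemma fderiv_collar_axis_normal (hα : ContDiff ℝ 3 α) (s : ℝ) :
    fderiv ℝ (collar α) (s, 0) (0, 1) = leftNormal (deriv α s) := by
  have hF := ((contDiff_collar hα).differentiable two_ne_zero (s, 0)).hasFDerivAt
  have hline : HasDerivAt (fun r => collar α (s, r)) (fderiv ℝ (collar α) (s, 0) (0, 1)) 0 :=
    hF.comp_hasDerivAt 0 ((hasDerivAt_const (0 : ℝ) s).prodMk (hasDerivAt_id 0))
  have hline' : HasDerivAt (fun r => collar α (s, r)) (leftNormal (deriv α s)) 0 := by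
    simpa [collar] using ((hasDerivAt_id (0 : ℝ)).smul_const _).const_add (α s)
  exact hline.unique hline'

lemma IsRegularClosedCurve.exists_isCollarRadius (h : IsRegularClosedCurve α L) (s₀ : ℝ) :
    ∃ δ, IsCollarRadius α s₀ δ := by
  have hF := contDiff_collar h.contDiff
  have hF₁ : ContDiff ℝ 1 (collar α) := hF.of_le (by norm_num)
  have hdet₀ : 0 < (fderiv ℝ (collar α) (s₀, 0)).det := by
    rw [det_eq_wedge, fderiv_collar_axis_tangent h.contDiff, fderiv_collar_axis_normal h.contDiff]
    exact wedge_leftNormal_pos (h.deriv_ne_zero s₀)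
  have hdet : ∀ᶠ q in 𝓝 (s₀, 0), 0 < (fderiv ℝ (collar α) q).det :=
    (ContinuousLinearMap.continuous_det.comp
      (hF.continuous_fderiv two_ne_zero)).continuousAt.eventually (lt_mem_nhds hdet₀)
  obtain ⟨V, hV, hinj⟩ := exists_injOn_nhds_of_det_fderiv_ne_zero hF₁ hdet₀.ne'
  have hcurve : ∀ᶠ z in 𝓝 (collar α (s₀, 0)), z ∈ range α → ∃ s, (s, 0) ∈ V ∧ α s = z := by
    rw [collar_axis, ← eventually_nhdsWithin_iff,
      ← map_nhds_eq_nhdsWithin_range_of_periodic h.period_pos h.periodic h.injOn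
        h.contDiff.continuous, eventually_map]
    filter_upwards [(Continuous.prodMk_left (0 : ℝ)).continuousAt hV] with s hs
    exact ⟨s, hs, rfl⟩
  have hsnd : ∀ᶠ q in 𝓝 (s₀, 0), collar α q ∈ range α → q.2 = 0 := by
    filter_upwards [hF.continuous.continuousAt.eventually hcurve, hV] with q hq hqV hqα
    obtain ⟨s, hs, hsq⟩ := hq hqα
    rw [← hinj hs hqV ((collar_axis α s).trans hsq)]
  obtain ⟨δ, hδ, hball⟩ := nhds_basis_closedBall.eventually_iff.1 (hdet.and (hsnd.and hV))
  have hbox : Icc (s₀ - δ) (s₀ + δ) ×ˢ Icc (-δ) δ = closedBall (s₀, (0 : ℝ)) δ := by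
    rw [← closedBall_prod_same, Real.closedBall_eq_Icc, Real.closedBall_eq_Icc, zero_sub, zero_add]
  refine ⟨δ, hδ, ?_, ?_, ?_⟩ <;> rw [hbox]
  exacts [hinj.mono fun q hq => (hball hq).2.2, fun q hq => (hball hq).1,
    fun q hq => (hball hq).2.1]

lemma IsCollarRadius.two_mul_lt_period (hδ : IsCollarRadius α s₀ δ) (h : IsRegularClosedCurve α L) :
    2 * δ < L := by
  have hδ₀ := hδ.pos
  have hL := h.period_pos
  by_contra! hle
  have heq : ((s₀ - δ + L, 0) : ℝ × ℝ) = (s₀ - δ, 0) :=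
    hδ.injOn ⟨⟨by simp; linarith, by simp; linarith⟩, by simp [hδ₀.le]⟩
      ⟨⟨by simp, by simp; linarith⟩, by simp [hδ₀.le]⟩ (by simp [collar_axis, h.periodic _])
  simp [hL.ne'] at heq

lemma IsCollarRadius.isOpen_image (hδ : IsCollarRadius α s₀ δ) (hα : ContDiff ℝ 3 α) :
    IsOpen (collar α '' (Ioo (s₀ - δ) (s₀ + δ) ×ˢ Ioo (-δ) δ)) :=
  isOpen_image_of_det_fderiv_ne_zero ((contDiff_collar hα).of_le (by norm_num))
    (isOpen_Ioo.prod isOpen_Ioo) fun q hq =>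
      (hδ.det_pos q (prod_mono Ioo_subset_Icc_self Ioo_subset_Icc_self hq)).ne'

end Collar

section OneSidedness

/-- The curve `α` is the positively oriented boundary of the bounded open set `Ω`: it
parametrises the frontier, and `Ω` contains the points just to its left. -/
structure IsPositiveBoundary (α : ℝ → ℝ × ℝ) (L : ℝ) (Ω : Set (ℝ × ℝ)) : Prop
    extends IsRegularClosedCurve α L where
  isOpen : IsOpen Ω
  isBounded : Bornology.IsBounded Ω
  frontier_eq : frontier Ω = range α
  left_mem : ∀ s, ∀ᶠ r in 𝓝[>] (0 : ℝ), collar α (s, r) ∈ Ω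

variable {α : ℝ → ℝ × ℝ} {L s s₀ δ : ℝ} {Ω : Set (ℝ × ℝ)}

namespace IsPositiveBoundary

lemma of_arcLength (hL : 0 < L) (hα : ContDiff ℝ 3 α)
    (harc : ∀ s, (deriv α s).1 ^ 2 + (deriv α s).2 ^ 2 = 1) (hper : Function.Periodic α L)
    (hinj : InjOn α (Ico 0 L)) (hΩ : IsOpen Ω) (hΩb : Bornology.IsBounded Ω)
    (hfrontier : frontier Ω = α '' Ico 0 L)
    (hleft : ∀ s, ∃ ε > 0, ∀ r ∈ Ioo (0 : ℝ) ε, α s + r • leftNormal (deriv α s) ∈ Ω) :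
    IsPositiveBoundary α L Ω where
  period_pos := hL
  contDiff := hα
  deriv_ne_zero s hs := by simpa [hs] using harc s
  periodic := hper
  injOn := hinj
  isOpen := hΩ
  isBounded := hΩb
  frontier_eq := hfrontier.trans (image_Ico_eq_range_of_periodic hL hper)
  left_mem s := by
    obtain ⟨ε, hε, hmem⟩ := hleft s
    filter_upwards [Ioo_mem_nhdsGT hε] using hmem

lemma curve_mem_closure (h : IsPositiveBoundary α L Ω) (s : ℝ) : α s ∈ closure Ω :=
  frontier_subset_closure (h.frontier_eq ▸ mem_range_self s)

lemma curve_notMem (h : IsPositiveBoundary α L Ω) (s : ℝ) : α s ∉ Ω := fun hs => by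
  have hfrontier : α s ∈ frontier Ω := h.frontier_eq ▸ mem_range_self s
  exact h.isOpen.inter_frontier_eq.subset ⟨hs, hfrontier⟩

lemma image_collar_subset_of_inter_nonempty (h : IsPositiveBoundary α L Ω)
    (hδ : IsCollarRadius α s₀ δ) {J : Set ℝ} (hJ : IsPreconnected J) (hJδ : J ⊆ Icc (-δ) δ)
    (hJ₀ : (0 : ℝ) ∉ J)
    (hne : (collar α '' (Ioo (s₀ - δ) (s₀ + δ) ×ˢ J) ∩ Ω).Nonempty) :
    collar α '' (Ioo (s₀ - δ) (s₀ + δ) ×ˢ J) ⊆ Ω := by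
  refine subset_of_isPreconnected_of_disjoint_frontier ((isPreconnected_Ioo.prod hJ).image _
    (contDiff_collar h.contDiff).continuous.continuousOn) h.isOpen hne ?_
  rw [h.frontier_eq, disjoint_left]
  rintro _ ⟨q, hq, rfl⟩ hqα
  have hq₀ : q.2 = 0 := hδ.snd_eq_zero q (prod_mono Ioo_subset_Icc_self hJδ hq) hqα
  exact hJ₀ (hq₀ ▸ hq.2)

lemma image_collar_left_subset (h : IsPositiveBoundary α L Ω) (hδ : IsCollarRadius α s₀ δ) :
    collar α '' (Ioo (s₀ - δ) (s₀ + δ) ×ˢ Ioo 0 δ) ⊆ Ω := by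
  obtain ⟨r, hrΩ, hr⟩ := ((h.left_mem s₀).and (Ioo_mem_nhdsGT hδ.pos)).exists
  have hs₀ : s₀ ∈ Ioo (s₀ - δ) (s₀ + δ) := ⟨sub_lt_self _ hδ.pos, lt_add_of_pos_right _ hδ.pos⟩
  exact h.image_collar_subset_of_inter_nonempty hδ isPreconnected_Ioo
    (Ioo_subset_Icc_self.trans (Icc_subset_Icc (neg_nonpos.2 hδ.pos.le) le_rfl)) (by simp)
    ⟨_, ⟨(s₀, r), ⟨hs₀, hr⟩, rfl⟩, hrΩ⟩

lemma mem_interior_closure_iff (h : IsPositiveBoundary α L Ω) (hδ : IsCollarRadius α s₀ δ)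
    (hs : s ∈ Ioo (s₀ - δ) (s₀ + δ)) :
    α s ∈ interior (closure Ω) ↔
      (collar α '' (Ioo (s₀ - δ) (s₀ + δ) ×ˢ Ioo (-δ) 0) ∩ Ω).Nonempty := by
  have hδ₀ := hδ.pos
  have hright : Ioo (-δ) 0 ⊆ Icc (-δ) δ :=
    Ioo_subset_Icc_self.trans (Icc_subset_Icc le_rfl hδ.pos.le)
  refine ⟨fun hmem => ?_, fun hne => ?_⟩
  · have hcont : Continuous fun r => collar α (s, r) :=
      (contDiff_collar h.contDiff).continuous.comp (Continuous.prodMk_right s)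
    have hmem' : ∀ᶠ r in 𝓝 (0 : ℝ), collar α (s, r) ∈ interior (closure Ω) :=
      hcont.continuousAt.eventually_mem
        (isOpen_interior.mem_nhds ((collar_axis α s).symm ▸ hmem))
    obtain ⟨r, hrmem, hr⟩ := ((hmem'.filter_mono nhdsWithin_le_nhds).and
      (Ioo_mem_nhdsLT (neg_lt_zero.2 hδ.pos))).exists
    refine ⟨_, ⟨(s, r), ⟨hs, hr⟩, rfl⟩, ?_⟩
    have hclosure := interior_subset hrmem
    rw [closure_eq_self_union_frontier, h.frontier_eq] at hclosure
    refine hclosure.resolve_right fun hrα => hr.2.ne ?_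
    exact hδ.snd_eq_zero (s, r) ⟨Ioo_subset_Icc_self hs, hright hr⟩ hrα
  · have hsub := h.image_collar_subset_of_inter_nonempty hδ isPreconnected_Ioo hright (by simp) hne
    have hopen := hδ.isOpen_image h.contDiff
    refine interior_maximal ?_ hopen ⟨(s, 0), ⟨hs, by simp [hδ₀]⟩, collar_axis α s⟩
    rintro _ ⟨⟨t, r⟩, ⟨ht, hr⟩, rfl⟩
    rcases lt_trichotomy r 0 with hneg | rfl | hpos
    · exact subset_closure (hsub (mem_image_of_mem _ ⟨ht, hr.1, hneg⟩))
    · exact (collar_axis α t).symm ▸ h.curve_mem_closure t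
    · exact subset_closure (h.image_collar_left_subset hδ (mem_image_of_mem _ ⟨ht, hpos, hr.2⟩))

lemma isLocallyConstant_mem_interior_closure (h : IsPositiveBoundary α L Ω) :
    IsLocallyConstant fun s => α s ∈ interior (closure Ω) := by
  rw [IsLocallyConstant.iff_eventually_eq]
  intro s₀
  obtain ⟨δ, hδ⟩ := h.exists_isCollarRadius s₀
  have hnhds := Ioo_mem_nhds (sub_lt_self s₀ hδ.pos) (lt_add_of_pos_right s₀ hδ.pos)
  filter_upwards [hnhds] with s hs
  rw [h.mem_interior_closure_iff hδ hs, h.mem_interior_closure_iff hδ (mem_of_mem_nhds hnhds)]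

lemma curve_notMem_interior_closure (h : IsPositiveBoundary α L Ω) (s : ℝ) :
    α s ∉ interior (closure Ω) := by
  intro hs
  have hrange : range α ⊆ interior (closure Ω) := by
    rintro _ ⟨t, rfl⟩
    exact h.isLocallyConstant_mem_interior_closure.apply_eq_of_preconnectedSpace s t ▸ hs
  have hclopen : IsClopen (closure Ω) := by
    rw [isClopen_iff_frontier_eq_empty, ← subset_empty_iff]
    intro z hz
    exact disjoint_interior_frontier.le_bot
      ⟨hrange (h.frontier_eq ▸ frontier_closure_subset hz), hz⟩
  rcases isClopen_iff.1 hclopen with hempty | huniv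
  · simp [hempty] at hs
  · exact noncompact_univ (ℝ × ℝ) (huniv ▸ h.isBounded.isCompact_closure)

lemma inter_image_collar (h : IsPositiveBoundary α L Ω) (hδ : IsCollarRadius α s₀ δ) :
    Ω ∩ collar α '' (Ioo (s₀ - δ) (s₀ + δ) ×ˢ Ioo (-δ) δ) =
      collar α '' (Ioo (s₀ - δ) (s₀ + δ) ×ˢ Ioo 0 δ) := by
  refine Subset.antisymm ?_ (subset_inter (h.image_collar_left_subset hδ) (image_mono
    (prod_mono_right (Ioo_subset_Ioo_left (neg_nonpos.2 hδ.pos.le)))))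
  rintro _ ⟨hz, ⟨s, r⟩, ⟨hs, hr⟩, rfl⟩
  rcases lt_trichotomy r 0 with hneg | rfl | hpos
  · refine absurd ?_ (h.curve_notMem_interior_closure s)
    exact (h.mem_interior_closure_iff hδ hs).2 ⟨_, mem_image_of_mem _ ⟨hs, hr.1, hneg⟩, hz⟩
  · exact absurd (collar_axis α s ▸ hz) (h.curve_notMem s)
  · exact mem_image_of_mem _ ⟨hs, hpos, hr.2⟩

end IsPositiveBoundary

end OneSidedness

section Green

/-- Green's formula on `Ω` for the field `φ • w`, with positively oriented boundary curve `α` of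
period `L`; `wedge w (α')` is the component of `w` along the outer normal. -/
def GreenFormula (α : ℝ → ℝ × ℝ) (L : ℝ) (Ω : Set (ℝ × ℝ)) (φ : ℝ × ℝ → ℝ) : Prop :=
  ∀ w, ∫ z in Ω, fderiv ℝ φ z w = ∫ s in (0 : ℝ)..L, φ (α s) * wedge w (deriv α s)

lemma setIntegral_inter_fderiv_apply {E : Type*} [NormedAddCommGroup E] [NormedSpace ℝ E]
    [MeasurableSpace E] (μ : Measure E) {S U : Set E} (hS : MeasurableSet S) {φ : E → ℝ}
    (hφU : tsupport φ ⊆ U) (w : E) :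
    ∫ z in S ∩ U, fderiv ℝ φ z w ∂μ = ∫ z in S, fderiv ℝ φ z w ∂μ := by
  refine (setIntegral_eq_of_subset_of_forall_sdiff_eq_zero hS inter_subset_left ?_).symm
  intro z hz
  have hzφ : fderiv ℝ φ z = 0 :=
    Function.notMem_support.1 fun hm => hz.2 ⟨hz.1, hφU (support_fderiv_subset ℝ hm)⟩
  simp [hzφ]

variable {α : ℝ → ℝ × ℝ} {L s₀ δ : ℝ} {Ω : Set (ℝ × ℝ)} {φ : ℝ × ℝ → ℝ}

namespace IsCollarRadius

lemma fluxDensity_eq_zero (hδ : IsCollarRadius α s₀ δ)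
    (hφ : tsupport φ ⊆ collar α '' (Ioo (s₀ - δ) (s₀ + δ) ×ˢ Ioo (-δ) δ)) {q : ℝ × ℝ}
    (hq : q ∈ Icc (s₀ - δ) (s₀ + δ) ×ˢ Icc (-δ) δ)
    (hq' : q ∉ Ioo (s₀ - δ) (s₀ + δ) ×ˢ Ioo (-δ) δ) (w v : ℝ × ℝ) :
    fluxDensity (collar α) φ w v q = 0 := by
  have hφq : φ (collar α q) = 0 := by
    refine image_eq_zero_of_notMem_tsupport fun hmem => hq' ?_
    obtain ⟨p, hp, hpq⟩ := hφ hmem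
    rwa [← hδ.injOn (prod_mono Ioo_subset_Icc_self Ioo_subset_Icc_self hp) hq hpq]
  rw [fluxDensity, hφq, zero_mul]

lemma setIntegral_image_collar_left (hδ : IsCollarRadius α s₀ δ) (hα : ContDiff ℝ 3 α)
    (hφ : ContDiff ℝ 1 φ)
    (hsupp : tsupport φ ⊆ collar α '' (Ioo (s₀ - δ) (s₀ + δ) ×ˢ Ioo (-δ) δ)) (w : ℝ × ℝ) :
    ∫ z in collar α '' (Ioo (s₀ - δ) (s₀ + δ) ×ˢ Ioo 0 δ), fderiv ℝ φ z w =
      ∫ s in (s₀ - δ)..(s₀ + δ), φ (α s) * wedge w (deriv α s) := by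
  have hδ₀ := hδ.pos
  have hle : s₀ - δ ≤ s₀ + δ := by linarith
  have hsub : Ioo (s₀ - δ) (s₀ + δ) ×ˢ Ioo 0 δ ⊆ Icc (s₀ - δ) (s₀ + δ) ×ˢ Icc (-δ) δ :=
    prod_mono Ioo_subset_Icc_self
      (Ioo_subset_Icc_self.trans (Icc_subset_Icc (neg_nonpos.2 hδ₀.le) le_rfl))
  have hbottom (s : ℝ) :
      fluxDensity (collar α) φ w (1, 0) (s, 0) = φ (α s) * wedge w (deriv α s) := by
    rw [fluxDensity, collar_axis, fderiv_collar_axis_tangent hα]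
  have htop : ∫ s in (s₀ - δ)..(s₀ + δ), fluxDensity (collar α) φ w (1, 0) (s, δ) = 0 := by
    refine intervalIntegral.integral_zero_ae (.of_forall fun s hs => ?_)
    rw [uIoc_of_le hle] at hs
    exact hδ.fluxDensity_eq_zero hsupp ⟨Ioc_subset_Icc_self hs, by simp [hδ₀.le]⟩ (by simp) _ _
  have hside : ∀ s ∈ Icc (s₀ - δ) (s₀ + δ), s ∉ Ioo (s₀ - δ) (s₀ + δ) →
      ∫ r in (0 : ℝ)..δ, fluxDensity (collar α) φ w (0, 1) (s, r) = 0 := fun s hs hs' => by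
    refine intervalIntegral.integral_zero_ae (.of_forall fun r hr => ?_)
    rw [uIoc_of_le hδ₀.le] at hr
    exact hδ.fluxDensity_eq_zero hsupp ⟨hs, by linarith [hr.1], hr.2⟩ (fun hm => hs' hm.1) _ _
  rw [setIntegral_image_fderiv_apply (a := (s₀ - δ, 0)) (b := (s₀ + δ, δ)) (contDiff_collar hα) hφ w
    ⟨hle, hδ₀.le⟩ (hδ.injOn.mono hsub) fun q hq => hδ.det_pos q (hsub hq)]
  simp only [hbottom, htop, hside _ (left_mem_Icc.2 hle) (by simp),
    hside _ (right_mem_Icc.2 hle) (by simp), add_zero, sub_zero]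

lemma eq_zero_of_mem_period (hδ : IsCollarRadius α s₀ δ) (h : IsRegularClosedCurve α L)
    (hφ : tsupport φ ⊆ collar α '' (Ioo (s₀ - δ) (s₀ + δ) ×ˢ Ioo (-δ) δ)) {s : ℝ}
    (hs : s ∈ Ico (s₀ - L / 2) (s₀ + L / 2)) (hs' : s ∉ Ioo (s₀ - δ) (s₀ + δ)) :
    φ (α s) = 0 := by
  have hδL := hδ.two_mul_lt_period h
  refine image_eq_zero_of_notMem_tsupport fun hmem => hs' ?_
  obtain ⟨⟨t, r⟩, ht, hts⟩ := hφ hmem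
  obtain rfl : r = 0 := hδ.snd_eq_zero _ (prod_mono Ioo_subset_Icc_self Ioo_subset_Icc_self ht)
    (hts ▸ mem_range_self s)
  have hinj := injOn_Ico_of_periodic h.period_pos h.periodic h.injOn (s₀ - L / 2)
  rw [show s₀ - L / 2 + L = s₀ + L / 2 by ring] at hinj
  have ht' : t ∈ Ico (s₀ - L / 2) (s₀ + L / 2) :=
    ⟨by linarith [ht.1.1], by linarith [ht.1.2]⟩
  exact hinj ht' hs ((collar_axis α t).symm.trans hts) ▸ ht.1

lemma integral_mul_eq_integral_period (hδ : IsCollarRadius α s₀ δ) (h : IsRegularClosedCurve α L)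
    (hφ : tsupport φ ⊆ collar α '' (Ioo (s₀ - δ) (s₀ + δ) ×ˢ Ioo (-δ) δ)) {c : ℝ → ℝ}
    (hc : Function.Periodic c L) :
    ∫ s in (s₀ - δ)..(s₀ + δ), φ (α s) * c s = ∫ s in (0 : ℝ)..L, φ (α s) * c s := by
  have hδ₀ := hδ.pos
  have hδL := hδ.two_mul_lt_period h
  have hper : Function.Periodic (fun s => φ (α s) * c s) L := fun s => by
    simp only [h.periodic s, hc s]
  have hshift := hper.intervalIntegral_add_eq (s₀ - L / 2) 0
  rw [zero_add, show s₀ - L / 2 + L = s₀ + L / 2 by ring] at hshift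
  rw [← hshift, integral_of_le (by linarith), integral_of_le (by linarith),
    integral_Ioc_eq_integral_Ioo, integral_Ioc_eq_integral_Ioo]
  refine (setIntegral_eq_of_subset_of_forall_sdiff_eq_zero measurableSet_Ioo
    (Ioo_subset_Ioo (by linarith) (by linarith)) fun s hs => ?_).symm
  rw [hδ.eq_zero_of_mem_period h hφ (Ioo_subset_Ico_self hs.1) hs.2, zero_mul]

end IsCollarRadius

lemma GreenFormula.of_sum {ι : Type*} [Fintype ι] {ψ : ι → ℝ × ℝ → ℝ} (hα : ContDiff ℝ 1 α)
    (hψ : ∀ i, ContDiff ℝ 1 (ψ i)) (hΩ : IsOpen Ω) (hΩb : Bornology.IsBounded Ω)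
    (hαΩ : ∀ s, α s ∈ closure Ω) (hsum : ∀ z ∈ closure Ω, ∑ i, ψ i z = φ z)
    (hgreen : ∀ i, GreenFormula α L Ω (ψ i)) : GreenFormula α L Ω φ := by
  intro w
  have hinside : ∫ z in Ω, fderiv ℝ φ z w = ∑ i, ∫ z in Ω, fderiv ℝ (ψ i) z w := by
    have hint (i : ι) : IntegrableOn (fun z => fderiv ℝ (ψ i) z w) Ω :=
      ((((hψ i).continuous_fderiv one_ne_zero).clm_apply
        continuous_const).continuousOn.integrableOn_compact hΩb.isCompact_closure).mono_set
        subset_closure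
    rw [← MeasureTheory.integral_finsetSum _ fun i _ => hint i]
    refine setIntegral_congr_fun hΩ.measurableSet fun z hz => ?_
    have hlocal : φ =ᶠ[𝓝 z] fun z => ∑ i, ψ i z := by
      filter_upwards [hΩ.mem_nhds hz] with y hy using (hsum y (subset_closure hy)).symm
    simp only [hlocal.fderiv_eq,
      fderiv_fun_sum fun i _ => (hψ i).differentiable one_ne_zero z, sum_apply]
  have hboundary : ∫ s in (0 : ℝ)..L, φ (α s) * wedge w (deriv α s) =
      ∑ i, ∫ s in (0 : ℝ)..L, ψ i (α s) * wedge w (deriv α s) := by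
    have hα' : Continuous (deriv α) := hα.continuous_deriv le_rfl
    have hint (i : ι) : Continuous fun s => ψ i (α s) * wedge w (deriv α s) :=
      ((hψ i).continuous.comp hα.continuous).mul
        ((continuous_const.mul hα'.snd).sub (continuous_const.mul hα'.fst))
    rw [← intervalIntegral.integral_finsetSum fun i _ => (hint i).intervalIntegrable _ _]
    refine integral_congr fun s _ => ?_
    simp only [← Finset.sum_mul, hsum _ (hαΩ s)]
  rw [hinside, hboundary]
  exact Finset.sum_congr rfl fun i _ => hgreen i w

namespace IsPositiveBoundary

lemma periodic_deriv (h : IsPositiveBoundary α L Ω) : Function.Periodic (deriv α) L := fun s => by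
  rw [← deriv_comp_add_const, funext h.periodic]

lemma greenFormula_of_tsupport_subset_image_collar (h : IsPositiveBoundary α L Ω)
    (hδ : IsCollarRadius α s₀ δ) (hφ : ContDiff ℝ 1 φ)
    (hsupp : tsupport φ ⊆ collar α '' (Ioo (s₀ - δ) (s₀ + δ) ×ˢ Ioo (-δ) δ)) :
    GreenFormula α L Ω φ := fun w => by
  rw [← setIntegral_inter_fderiv_apply volume h.isOpen.measurableSet hsupp,
    h.inter_image_collar hδ, hδ.setIntegral_image_collar_left h.contDiff hφ hsupp]
  exact hδ.integral_mul_eq_integral_period h.toIsRegularClosedCurve hsupp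
    (h.periodic_deriv.comp (wedge w))

lemma greenFormula_of_tsupport_subset (h : IsPositiveBoundary α L Ω) (hφ : ContDiff ℝ 1 φ)
    (hsupp : tsupport φ ⊆ Ω) : GreenFormula α L Ω φ := fun w => by
  have hcompact : HasCompactSupport φ :=
    h.isBounded.isCompact_closure.of_isClosed_subset (isClosed_tsupport φ)
      (hsupp.trans subset_closure)
  have hcurve (s : ℝ) : φ (α s) = 0 :=
    image_eq_zero_of_notMem_tsupport fun hs => h.curve_notMem s (hsupp hs)
  rw [← univ_inter Ω, setIntegral_inter_fderiv_apply volume .univ hsupp, setIntegral_univ,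
    integral_fderiv_apply_eq_zero volume hφ hcompact]
  simp only [hcurve, zero_mul, intervalIntegral.integral_zero]

lemma exists_isOpen_greenFormula (h : IsPositiveBoundary α L Ω) {z : ℝ × ℝ}
    (hz : z ∈ closure Ω) : ∃ U, IsOpen U ∧ z ∈ U ∧
      ∀ φ, ContDiff ℝ 1 φ → tsupport φ ⊆ U → GreenFormula α L Ω φ := by
  rw [closure_eq_self_union_frontier, h.frontier_eq] at hz
  rcases hz with hz | ⟨s, rfl⟩
  · exact ⟨Ω, h.isOpen, hz, fun φ => h.greenFormula_of_tsupport_subset⟩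
  · obtain ⟨δ, hδ⟩ := h.exists_isCollarRadius s
    have hmem : ((s, 0) : ℝ × ℝ) ∈ Ioo (s - δ) (s + δ) ×ˢ Ioo (-δ) δ := by simp [hδ.pos]
    exact ⟨_, hδ.isOpen_image h.contDiff, ⟨(s, 0), hmem, collar_axis α s⟩,
      fun φ => h.greenFormula_of_tsupport_subset_image_collar hδ⟩

theorem greenFormula (h : IsPositiveBoundary α L Ω) (hφ : ContDiff ℝ 1 φ) :
    GreenFormula α L Ω φ := by
  choose! U hUo hzU hgreen using fun z => h.exists_isOpen_greenFormula (z := z)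
  obtain ⟨t, ψ, hψ, hsum⟩ := exists_contDiff_decomposition (n := 1) h.isBounded.isCompact_closure
    hUo hzU (mod_cast hφ)
  exact .of_sum (h.contDiff.of_le (by norm_num)) (fun i => mod_cast (hψ i).2.1) h.isOpen
    h.isBounded h.curve_mem_closure hsum
    fun i => hgreen _ (hψ i).1 _ (mod_cast (hψ i).2.1) (hψ i).2.2

lemma volume_real_pos (h : IsPositiveBoundary α L Ω) : 0 < volume.real Ω := by
  obtain ⟨r, hr⟩ := (h.left_mem 0).exists
  exact ENNReal.toReal_pos (h.isOpen.measure_pos volume ⟨_, hr⟩).ne' h.isBounded.measure_lt_top.ne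

theorem integral_wedge_deriv (h : IsPositiveBoundary α L Ω) :
    ∫ s in (0 : ℝ)..L, wedge (α s) (deriv α s) = 2 * volume.real Ω := by
  have hα := h.contDiff.continuous
  have hα' := h.contDiff.continuous_deriv (by norm_num)
  have hfst := h.greenFormula contDiff_fst (1, 0)
  have hsnd := h.greenFormula contDiff_snd (0, 1)
  simp only [fderiv_fst, ContinuousLinearMap.coe_fst', fderiv_snd, ContinuousLinearMap.coe_snd',
    setIntegral_const, smul_eq_mul, mul_one, wedge] at hfst hsnd
  rw [two_mul]
  nth_rw 1 [hfst]
  rw [hsnd, ← intervalIntegral.integral_add (Continuous.intervalIntegrable (by fun_prop) _ _)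
    (Continuous.intervalIntegrable (by fun_prop) _ _)]
  refine integral_congr fun s _ => ?_
  simp only [wedge]
  ring

end IsPositiveBoundary

end Green

end PlanarGreen

section SecondVariation

/-- The second variation `Φ(u) = -∬ u (Δ₀ u + W u)` of the energy with potential `W` on the
cylinder of height `l` over a curve of length `L`, at a separated function
`u (t, s) = f t * g s`. -/
noncomputable def secondVariation (W : ℝ → ℝ) (L l : ℝ) (f g : ℝ → ℝ) : ℝ :=
  -∫ s in (0 : ℝ)..L, ∫ t in (0 : ℝ)..l, (f t * g s) *
    (deriv (deriv f) t * g s + f t * deriv (deriv g) s + W s * (f t * g s))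

variable {W f g u v κ : ℝ → ℝ} {L l a A μ : ℝ} {α : ℝ → ℝ × ℝ} {Ω : Set (ℝ × ℝ)}

lemma secondVariation_of_deriv_deriv_eq (hf : ∀ t, deriv (deriv f) t = -μ * f t) :
    secondVariation W L l f g = -((∫ t in (0 : ℝ)..l, f t ^ 2) *
      ∫ s in (0 : ℝ)..L, g s * (deriv (deriv g) s + (W s - μ) * g s)) := by
  rw [secondVariation, ← intervalIntegral.integral_const_mul]
  congr 1
  refine integral_congr fun s _ => ?_
  simp only [← intervalIntegral.integral_mul_const, hf]
  exact integral_congr fun t _ => by ring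

lemma mul_deriv_deriv_add_mul_deriv_deriv (hu : ContDiff ℝ 2 u) (hv : ContDiff ℝ 2 v)
    (huv : ∀ s, u s ^ 2 + v s ^ 2 = 1) (s : ℝ) :
    u s * deriv (deriv u) s + v s * deriv (deriv v) s = -(deriv u s ^ 2 + deriv v s ^ 2) := by
  have hderiv {w : ℝ → ℝ} (hw : ContDiff ℝ 2 w) (s : ℝ) : HasDerivAt w (deriv w s) s :=
    (hw.differentiable two_ne_zero s).hasDerivAt
  have hderiv₂ {w : ℝ → ℝ} (hw : ContDiff ℝ 2 w) (s : ℝ) :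
      HasDerivAt (deriv w) (deriv (deriv w) s) s :=
    (((contDiff_succ_iff_deriv (n := 1)).1 hw).2.2.differentiable one_ne_zero s).hasDerivAt
  have horth (s : ℝ) : u s * deriv u s + v s * deriv v s = 0 := by
    have hconst := ((hderiv hu s).pow 2).add ((hderiv hv s).pow 2)
    have hzero := hconst.unique ((hasDerivAt_const s (1 : ℝ)).congr_of_eventuallyEq
      (.of_forall huv))
    simp at hzero
    linarith
  have hconst := ((hderiv hu s).mul (hderiv₂ hu s)).add ((hderiv hv s).mul (hderiv₂ hv s))
  have hzero := hconst.unique ((hasDerivAt_const s (0 : ℝ)).congr_of_eventuallyEq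
    (.of_forall horth))
  linarith

lemma secondVariation_add_secondVariation (hf : ∀ t, deriv (deriv f) t = -μ * f t)
    (hu : ContDiff ℝ 2 u) (hv : ContDiff ℝ 2 v) (huv : ∀ s, u s ^ 2 + v s ^ 2 = 1)
    (hW : Continuous W) :
    secondVariation W L l f u + secondVariation W L l f v = (∫ t in (0 : ℝ)..l, f t ^ 2) *
      (μ * L - ∫ s in (0 : ℝ)..L, (W s - (deriv u s ^ 2 + deriv v s ^ 2))) := by
  have hcont {w : ℝ → ℝ} (hw : ContDiff ℝ 2 w) :
      Continuous fun s => w s * (deriv (deriv w) s + (W s - μ) * w s) := by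
    have hw₂ : Continuous (deriv (deriv w)) :=
      ((contDiff_succ_iff_deriv (n := 1)).1 hw).2.2.continuous_deriv le_rfl
    exact hw.continuous.mul (hw₂.add ((hW.sub continuous_const).mul hw.continuous))
  have hu' : Continuous (deriv u) := hu.continuous_deriv (by norm_num)
  have hv' : Continuous (deriv v) := hv.continuous_deriv (by norm_num)
  have hsum : (∫ s in (0 : ℝ)..L, u s * (deriv (deriv u) s + (W s - μ) * u s)) +
      (∫ s in (0 : ℝ)..L, v s * (deriv (deriv v) s + (W s - μ) * v s)) =
      (∫ s in (0 : ℝ)..L, (W s - (deriv u s ^ 2 + deriv v s ^ 2))) - μ * L := by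
    calc
      _ = ∫ s in (0 : ℝ)..L, (W s - (deriv u s ^ 2 + deriv v s ^ 2) - μ) := by
        rw [← intervalIntegral.integral_add ((hcont hu).intervalIntegrable _ _)
          ((hcont hv).intervalIntegrable _ _)]
        refine integral_congr fun s _ => ?_
        linear_combination mul_deriv_deriv_add_mul_deriv_deriv hu hv huv s + (W s - μ) * huv s
      _ = _ := by
        rw [intervalIntegral.integral_sub (Continuous.intervalIntegrable (by fun_prop) _ _)
          intervalIntegrable_const, intervalIntegral.integral_const, smul_eq_mul, sub_zero,
          mul_comm L]
  rw [secondVariation_of_deriv_deriv_eq hf, secondVariation_of_deriv_deriv_eq hf]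
  linear_combination -(∫ t in (0 : ℝ)..l, f t ^ 2) * hsum

lemma deriv_deriv_sin_const_mul (c t : ℝ) :
    deriv (deriv fun t => sin (c * t)) t = -c ^ 2 * sin (c * t) := by
  have hlin (t : ℝ) : HasDerivAt (fun t => c * t) c t := by
    simpa using (hasDerivAt_id t).const_mul c
  rw [funext fun t => (hlin t).sin.deriv, ((hlin t).cos.mul_const c).deriv]
  ring

lemma integral_sin_pi_div_mul_sq (hl : l ≠ 0) : ∫ t in (0 : ℝ)..l, sin (π / l * t) ^ 2 = l / 2 := by
  rw [intervalIntegral.integral_comp_mul_left (fun t => sin t ^ 2) (div_ne_zero pi_ne_zero hl),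
    mul_zero, div_mul_cancel₀ _ hl, integral_sin_sq]
  simp
  field_simp

lemma sq_pi_div_mul_lt_of_sqrt_lt (hL : 0 ≤ L) (ha : 0 < a) (hA : 0 < A)
    (hlong : π / 2 * √(L / (a * A)) < l) : (π / l) ^ 2 * L < 4 * a * A := by
  have hl : 0 < l := (by positivity : 0 ≤ π / 2 * √(L / (a * A))).trans_lt hlong
  have hsq : (π / 2) ^ 2 * (L / (a * A)) < l ^ 2 := by
    have hpow := pow_lt_pow_left₀ hlong (by positivity) two_ne_zero
    rwa [mul_pow, Real.sq_sqrt (by positivity)] at hpow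
  rw [← mul_div_assoc, div_lt_iff₀ (by positivity)] at hsq
  rw [div_pow, div_mul_eq_mul_div, div_lt_iff₀ (by positivity)]
  linarith

lemma integral_clm_deriv_of_periodic (hα : ContDiff ℝ 1 α) (hper : Function.Periodic α L)
    (e : ℝ × ℝ →L[ℝ] ℝ) : ∫ s in (0 : ℝ)..L, e (deriv α s) = 0 := by
  have hderiv (s : ℝ) : HasDerivAt (fun s => e (α s)) (e (deriv α s)) s :=
    e.hasFDerivAt.comp_hasDerivAt s (hα.differentiable one_ne_zero s).hasDerivAt
  have hcont : Continuous fun s => e (deriv α s) := e.continuous.comp (hα.continuous_deriv le_rfl)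
  rw [integral_eq_sub_of_hasDerivAt (fun s _ => hderiv s) (hcont.intervalIntegrable _ _),
    hper.eq, sub_self]

lemma secondVariation_tangent_add (h : IsPositiveBoundary α L Ω)
    (harc : ∀ s, (deriv α s).1 ^ 2 + (deriv α s).2 ^ 2 = 1)
    (hcurv : ∀ s, deriv (deriv α) s = κ s • leftNormal (deriv α s)) (a : ℝ) (hl : l ≠ 0) :
    let W := fun s => κ s ^ 2 + 2 * a * wedge (α s) (deriv α s)
    let f := fun t => sin (π / l * t)
    secondVariation W L l f (fun s => (deriv α s).1) +
        secondVariation W L l f (fun s => (deriv α s).2) =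
      l / 2 * ((π / l) ^ 2 * L - 4 * a * volume.real Ω) := by
  intro W f
  have hα' : ContDiff ℝ 2 (deriv α) := (contDiff_succ_iff_deriv.1 h.contDiff).2.2
  have hderiv (s : ℝ) : HasDerivAt (deriv α) (κ s • leftNormal (deriv α s)) s :=
    hcurv s ▸ (hα'.differentiable two_ne_zero s).hasDerivAt
  have hfst (s : ℝ) : deriv (fun s => (deriv α s).1) s = (κ s • leftNormal (deriv α s)).1 :=
    ((ContinuousLinearMap.fst ℝ ℝ ℝ).hasFDerivAt.comp_hasDerivAt s (hderiv s)).deriv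
  have hsnd (s : ℝ) : deriv (fun s => (deriv α s).2) s = (κ s • leftNormal (deriv α s)).2 :=
    ((ContinuousLinearMap.snd ℝ ℝ ℝ).hasFDerivAt.comp_hasDerivAt s (hderiv s)).deriv
  have hκ (s : ℝ) : deriv (fun s => (deriv α s).1) s ^ 2 + deriv (fun s => (deriv α s).2) s ^ 2 =
      κ s ^ 2 := by
    rw [hfst, hsnd]
    simp only [leftNormal, Prod.smul_fst, Prod.smul_snd, smul_eq_mul]
    linear_combination κ s ^ 2 * harc s
  have hW : Continuous W := by
    have hα := h.contDiff.continuous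
    have hα₁ := hα'.continuous
    have hα₂ := hα'.fst.continuous_deriv one_le_two
    have hα₃ := hα'.snd.continuous_deriv one_le_two
    simp only [W, ← hκ, wedge]
    fun_prop
  rw [secondVariation_add_secondVariation (deriv_deriv_sin_const_mul _) hα'.fst hα'.snd harc hW,
    integral_sin_pi_div_mul_sq hl]
  simp only [W, hκ, add_sub_cancel_left, intervalIntegral.integral_const_mul,
    h.integral_wedge_deriv]
  ring

theorem instability_of_long_columns_general (h : IsPositiveBoundary α L Ω) (ha : 0 < a)
    (hsmooth : ContDiff ℝ (⊤ : ℕ∞) α)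
    (harc : ∀ s, (deriv α s).1 ^ 2 + (deriv α s).2 ^ 2 = 1)
    (hcurv : ∀ s, deriv (deriv α) s = κ s • leftNormal (deriv α s))
    (hlong : π / 2 * √(L / (a * volume.real Ω)) < l) :
    ∃ f g : ℝ → ℝ, ContDiff ℝ (⊤ : ℕ∞) f ∧ ContDiff ℝ (⊤ : ℕ∞) g ∧
      f 0 = 0 ∧ f l = 0 ∧ (∀ s, g (s + L) = g s) ∧ (∫ s in (0 : ℝ)..L, g s) = 0 ∧
      secondVariation (fun s => κ s ^ 2 + 2 * a * wedge (α s) (deriv α s)) L l f g < 0 := by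
  have hl : 0 < l := (by positivity : 0 ≤ π / 2 * √(L / (a * volume.real Ω))).trans_lt hlong
  have hthreshold := sq_pi_div_mul_lt_of_sqrt_lt h.period_pos.le ha h.volume_real_pos hlong
  have hsum := secondVariation_tangent_add h harc hcurv a hl.ne'
  have hneg : l / 2 * ((π / l) ^ 2 * L - 4 * a * volume.real Ω) < 0 :=
    mul_neg_of_pos_of_neg (half_pos hl) (sub_neg.2 hthreshold)
  obtain ⟨e, he⟩ : ∃ e : ℝ × ℝ →L[ℝ] ℝ,
      secondVariation (fun s => κ s ^ 2 + 2 * a * wedge (α s) (deriv α s)) L l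
        (fun t => sin (π / l * t)) (fun s => e (deriv α s)) < 0 := by
    by_contra! hnonneg
    exact (hsum.trans_lt hneg).not_ge
      (add_nonneg (hnonneg (.fst ℝ ℝ ℝ)) (hnonneg (.snd ℝ ℝ ℝ)))
  refine ⟨_, _, contDiff_sin.comp (contDiff_const.mul contDiff_id),
    e.contDiff.comp (contDiff_infty_iff_deriv.1 hsmooth).2, by simp, ?_,
    h.periodic_deriv.comp e, ?_, he⟩
  · simp only [id, Function.comp_apply, div_mul_cancel₀ _ hl.ne', sin_pi]
  · exact integral_clm_deriv_of_periodic (h.contDiff.of_le (by norm_num)) h.periodic e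

end SecondVariation

/-- Instability form of Theorem 1: if the column length exceeds
`(π/2)√(L/(a·area Ω))`, there is a separated admissible test function
`u(t,s) = f(t)g(s)` (vanishing at `t = 0, l`, with `g` `L`-periodic of zero
mean) making the second variation `Φ(u)` negative. -/
theorem instability_of_long_columns
    (α : ℝ → ℝ × ℝ) (κ : ℝ → ℝ) (L l a b : ℝ) (Ω : Set (ℝ × ℝ))
    (hL : 0 < L) (hl : 0 < l) (ha : 0 < a)
    (hsmooth : ContDiff ℝ (⊤ : ℕ∞) α)
    (harc : ∀ s, (deriv α s).1 ^ 2 + (deriv α s).2 ^ 2 = 1)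
    (hper : ∀ s, α (s + L) = α s)
    (hsimple : Set.InjOn α (Set.Ico 0 L))
    (hcurv : ∀ s, deriv (deriv α) s = κ s • (-(deriv α s).2, (deriv α s).1))
    (hlaplace : ∀ s, κ s = a * ((α s).1 ^ 2 + (α s).2 ^ 2) + b)
    (hΩopen : IsOpen Ω) (hΩbdd : Bornology.IsBounded Ω)
    (hbound : frontier Ω = α '' Set.Ico 0 L)
    (hccw : ∀ s, ∃ ε > 0, ∀ t ∈ Set.Ioo (0 : ℝ) ε,
      α s + t • (-(deriv α s).2, (deriv α s).1) ∈ Ω)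
    (hA : 0 < (volume Ω).toReal)
    (hlong : l > (π / 2) * Real.sqrt (L / (a * (volume Ω).toReal))) :
    ∃ f g : ℝ → ℝ, ContDiff ℝ (⊤ : ℕ∞) f ∧ ContDiff ℝ (⊤ : ℕ∞) g ∧
      f 0 = 0 ∧ f l = 0 ∧ (∀ s, g (s + L) = g s) ∧
      (∫ s in (0 : ℝ)..L, g s) = 0 ∧
      -(∫ s in (0 : ℝ)..L, ∫ t in (0 : ℝ)..l,
          (f t * g s) * (deriv (deriv f) t * g s + f t * deriv (deriv g) s
            + (κ s ^ 2 + 2 * a * ((α s).1 * (deriv α s).2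
                - (α s).2 * (deriv α s).1)) * (f t * g s)))
        < 0 :=
  instability_of_long_columns_general (.of_arcLength hL (contDiff_infty.1 hsmooth 3) harc hper
    hsimple hΩopen hΩbdd hbound hccw) ha hsmooth harc hcurv hlong
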